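/- Suppose q₁ : ℝⁿ → (1,∞) satisfies the log-Hölder conditions |q₁(x)-q₁(y)| ≤ C/(-ln|x-y|) for |x-y| ≤ 1/2 and |q₁(x)-q₁(y)| ≤ C/ln(e+|x|) for |y| ≥ |x|, with 1 < (q₁)_- ≤ (q₁)_+ < ∞. Let 0 < β < n/(q₁)_+ and define q₂ by 1/q₁(x) - 1/q₂(x) = β/n. Then for the balls B_k = B(0,2^k), ‖χ_{B_k}‖_{L^{q₂(·)}} ≤ C 2^{-kβ} ‖χ_{B_k}‖_{L^{q₁(·)}} for all k ∈ ℤ. -/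

import Mathlib

open MeasureTheory Metric
open scoped ENNReal

/-- The Luxemburg norm of `f` in the variable exponent Lebesgue space `L^{q(·)}(ℝⁿ)`. -/
noncomputable def vLpNorm {n : ℕ} (q : EuclideanSpace ℝ (Fin n) → ℝ)
    (f : EuclideanSpace ℝ (Fin n) → ℝ) : ℝ≥0∞ :=
  sInf {η : ℝ≥0∞ | η ≠ 0 ∧ ∫⁻ x, ((‖f x‖₊ : ℝ≥0∞) / η) ^ (q x) ≤ 1}

/-- The log-Hölder conditions (C1) and (C2) for a variable exponent. -/
def LogHolder {n : ℕ} (q : EuclideanSpace ℝ (Fin n) → ℝ) : Prop :=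
  ∃ C > 0,
    (∀ x y : EuclideanSpace ℝ (Fin n), dist x y ≤ 1/2 →
      |q x - q y| ≤ C / (-Real.log (dist x y))) ∧
    (∀ x y : EuclideanSpace ℝ (Fin n), ‖x‖ ≤ ‖y‖ →
      |q x - q y| ≤ C / Real.log (Real.exp 1 + ‖x‖))


theorem aux_exp (n : ℕ) (q t R M : ℝ) (hR : 0 < R) (ht : 1 ≤ t)
    (h : |q - t| * |Real.log R| ≤ M) :
    (R ^ ((n:ℝ) / t)) ^ (-q) ≤ Real.exp (n * M) * (R ^ n)⁻¹ ∧
    Real.exp (-(n * M)) * (R ^ n)⁻¹ ≤ (R ^ ((n:ℝ) / t)) ^ (-q) := by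
  have e1 : (R ^ ((n:ℝ) / t)) ^ (-q) = Real.exp (-(n * ((q - t) * Real.log R) / t)) * (R ^ n)⁻¹ := by
    rw [← Real.rpow_mul hR.le, ← Real.rpow_natCast, ← Real.rpow_neg hR.le,
      Real.rpow_def_of_pos hR, Real.rpow_def_of_pos hR, ← Real.exp_add]
    congr 1
    field_simp
    ring
  rw [← abs_mul] at h
  have hM : 0 ≤ M := (abs_nonneg _).trans h
  have h1 : |n * ((q - t) * Real.log R) / t| ≤ n * M := by
    rw [abs_div, abs_mul, abs_of_pos (by linarith : 0 < t), Nat.abs_cast]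
    exact (div_le_self (by positivity) ht).trans (by gcongr)
  rw [abs_le] at h1
  rw [e1]
  constructor
  · gcongr
    linarith [h1.1]
  · gcongr
    exact h1.2

theorem aux_vol (n : ℕ) (r : ℝ) (hr : 0 ≤ r) :
    volume (closedBall (0 : EuclideanSpace ℝ (Fin n)) r) =
      ENNReal.ofReal (r ^ n * (volume (closedBall (0 : EuclideanSpace ℝ (Fin n)) 1)).toReal) := by
  have h := Measure.addHaar_closedBall' (volume : Measure (EuclideanSpace ℝ (Fin n))) 0 hr
  rw [finrank_euclideanSpace_fin] at h
  rw [h, ENNReal.ofReal_mul (by positivity), ENNReal.ofReal_toReal]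
  exact measure_closedBall_lt_top.ne

theorem aux_upper (n : ℕ) (q : EuclideanSpace ℝ (Fin n) → ℝ) (T t R M : ℝ) (hR : 0 < R)
    (ht : 1 ≤ t) (htT : t ≤ T) (hq : ∀ x, 1 ≤ q x)
    (h : ∀ x, ‖x‖ ≤ R → |q x - t| * |Real.log R| ≤ M ∨ (1 ≤ R ∧ ‖x‖ ≤ R ^ (1 / T))) :
    vLpNorm q ((closedBall (0 : EuclideanSpace ℝ (Fin n)) R).indicator fun _ => (1:ℝ)) ≤
      ENNReal.ofReal ((1 + (Real.exp (n * M) + 1) *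
        (volume (closedBall (0 : EuclideanSpace ℝ (Fin n)) 1)).toReal) * R ^ ((n:ℝ) / t)) := by
  set v := (volume (closedBall (0 : EuclideanSpace ℝ (Fin n)) 1)).toReal with hv
  have hv0 : 0 ≤ v := ENNReal.toReal_nonneg
  set K := 1 + (Real.exp (n * M) + 1) * v with hK
  have hK1 : 1 ≤ K := by
    have : 0 ≤ (Real.exp (n * M) + 1) * v := by positivity
    linarith
  have hK0 : 0 < K := by linarith
  have hT : 0 < T := by linarith
  have hpos : 0 < K * R ^ ((n:ℝ) / t) := by positivity
  refine sInf_le ⟨by simpa using hpos, ?_⟩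
  set a := K⁻¹ * (Real.exp (n * M) * (R ^ n)⁻¹) with ha
  set b := K⁻¹ * ((R ^ (1 / T)) ^ n)⁻¹ with hb
  have key : ∀ x, ((‖(closedBall (0 : EuclideanSpace ℝ (Fin n)) R).indicator (fun _ => (1:ℝ)) x‖₊ : ℝ≥0∞) /
      ENNReal.ofReal (K * R ^ ((n:ℝ) / t))) ^ (q x) ≤
      (closedBall (0 : EuclideanSpace ℝ (Fin n)) R).indicator (fun _ => ENNReal.ofReal a) x +
      (closedBall (0 : EuclideanSpace ℝ (Fin n)) (R ^ (1 / T))).indicator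
        (fun _ => ENNReal.ofReal b) x := by
    intro x
    have hqx := hq x
    by_cases hx : x ∈ closedBall (0 : EuclideanSpace ℝ (Fin n)) R
    · rw [Set.indicator_of_mem hx, Set.indicator_of_mem hx]
      simp only [nnnorm_one, ENNReal.coe_one, one_div]
      rw [← ENNReal.ofReal_inv_of_pos hpos, ENNReal.ofReal_rpow_of_pos (by positivity),
        Real.inv_rpow hpos.le, ← Real.rpow_neg hpos.le, Real.mul_rpow hK0.le (by positivity)]
      have hKq : K ^ (-q x) ≤ K⁻¹ := by
        rw [← Real.rpow_neg_one]
        exact Real.rpow_le_rpow_of_exponent_le hK1 (by linarith)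
      rcases h x (by simpa using hx) with h1 | ⟨h1, h2⟩
      · refine le_add_right (ENNReal.ofReal_le_ofReal ?_)
        have := (aux_exp n (q x) t R M hR ht h1).1
        rw [ha]
        gcongr
      · rw [Set.indicator_of_mem (by simpa using h2)]
        refine le_add_left (ENNReal.ofReal_le_ofReal ?_)
        rw [hb]
        gcongr
        rw [← Real.rpow_natCast, ← Real.rpow_mul hR.le, ← Real.rpow_mul hR.le, ← Real.rpow_neg hR.le]
        apply Real.rpow_le_rpow_of_exponent_le h1
        have : 1 / T ≤ q x / t := by gcongr
        have h3 : (n:ℝ) * (1 / T) ≤ n * (q x / t) := by gcongr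
        calc (n:ℝ) / t * -q x = -(n * (q x / t)) := by ring
          _ ≤ -(n * (1 / T)) := by linarith
          _ = _ := by ring
    · rw [Set.indicator_of_notMem hx]
      simp [ENNReal.zero_rpow_of_pos (by linarith : 0 < q x)]
  refine (lintegral_mono key).trans ?_
  rw [lintegral_add_left (measurable_const.indicator measurableSet_closedBall),
    lintegral_indicator_const measurableSet_closedBall,
    lintegral_indicator_const measurableSet_closedBall, aux_vol n R hR.le,
    aux_vol n (R ^ (1 / T)) (by positivity), ← ENNReal.ofReal_mul (by positivity),
    ← ENNReal.ofReal_mul (by positivity), ← ENNReal.ofReal_add (by positivity) (by positivity)]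
  rw [← ENNReal.ofReal_one]
  apply ENNReal.ofReal_le_ofReal
  rw [← hv]
  have hS : 0 < (R ^ (1 / T)) ^ n := by positivity
  have hS2 : 0 < R ^ n := by positivity
  have : a * (R ^ n * v) + b * ((R ^ (1 / T)) ^ n * v) = K⁻¹ * ((Real.exp (n * M) + 1) * v) := by
    rw [ha, hb]
    generalize (R ^ (1 / T)) ^ n = S at *
    field_simp
  rw [this, inv_mul_le_iff₀ hK0]
  linarith

theorem aux_lower (n : ℕ) (hn : 0 < n) (q : EuclideanSpace ℝ (Fin n) → ℝ) (t R M κ : ℝ)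
    (hR : 0 < R) (ht : 1 ≤ t) (hq : ∀ x, 1 ≤ q x)
    (h : ∀ x, ‖x‖ ≤ R → R / 2 ≤ ‖x‖ → |q x - t| * |Real.log R| ≤ M)
    (hκ : 0 < κ) (hκ1 : κ ≤ 1)
    (hκ2 : 4 * κ ≤ Real.exp (-(n * M)) *
        (volume (closedBall (0 : EuclideanSpace ℝ (Fin n)) 1)).toReal) :
    ENNReal.ofReal (κ * R ^ ((n:ℝ) / t)) ≤
    vLpNorm q ((closedBall (0 : EuclideanSpace ℝ (Fin n)) R).indicator fun _ => (1:ℝ)) := by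
  set v := (volume (closedBall (0 : EuclideanSpace ℝ (Fin n)) 1)).toReal with hv
  have hv0 : 0 ≤ v := ENNReal.toReal_nonneg
  have hpos : 0 < κ * R ^ ((n:ℝ) / t) := by positivity
  refine le_sInf ?_
  rintro η ⟨hη0, hη⟩
  by_contra! hlt
  set a := κ⁻¹ * (Real.exp (-(n * M)) * (R ^ n)⁻¹) with ha
  set A := closedBall (0 : EuclideanSpace ℝ (Fin n)) R \ closedBall 0 (R / 2) with hA
  have hAm : MeasurableSet A := measurableSet_closedBall.diff measurableSet_closedBall
  have key : ∀ x, A.indicator (fun _ => ENNReal.ofReal a) x ≤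
      ((‖(closedBall (0 : EuclideanSpace ℝ (Fin n)) R).indicator (fun _ => (1:ℝ)) x‖₊ : ℝ≥0∞) /
      η) ^ (q x) := by
    intro x
    have hqx := hq x
    by_cases hx : x ∈ A
    · rw [Set.indicator_of_mem hx, Set.indicator_of_mem hx.1]
      have hx1 : ‖x‖ ≤ R := by simpa using hx.1
      have hx2 : R / 2 < ‖x‖ := by simpa using hx.2
      simp only [nnnorm_one, ENNReal.coe_one, one_div]
      calc ENNReal.ofReal a ≤ ((ENNReal.ofReal (κ * R ^ ((n:ℝ) / t)))⁻¹) ^ (q x) := by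
            rw [← ENNReal.ofReal_inv_of_pos hpos, ENNReal.ofReal_rpow_of_pos (by positivity),
              Real.inv_rpow hpos.le, ← Real.rpow_neg hpos.le, Real.mul_rpow hκ.le (by positivity)]
            apply ENNReal.ofReal_le_ofReal
            have hKq : κ⁻¹ ≤ κ ^ (-q x) := by
              rw [← Real.rpow_neg_one]
              exact Real.rpow_le_rpow_of_exponent_ge hκ hκ1 (by linarith)
            have := (aux_exp n (q x) t R M hR ht (h x hx1 hx2.le)).2
            rw [ha]
            gcongr
        _ ≤ _ := by
            apply ENNReal.rpow_le_rpow _ (by linarith)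
            exact ENNReal.inv_le_inv.2 hlt.le
    · rw [Set.indicator_of_notMem hx]
      exact zero_le
  have h1 := (lintegral_mono key).trans hη
  rw [lintegral_indicator_const hAm] at h1
  have hvolA : ENNReal.ofReal (R ^ n * v / 2) ≤ volume A := by
    refine le_trans ?_ (le_measure_sdiff)
    rw [aux_vol n R hR.le, aux_vol n (R / 2) (by positivity), ← hv,
      ← ENNReal.ofReal_sub _ (by positivity)]
    apply ENNReal.ofReal_le_ofReal
    have h2 : (2:ℝ) ≤ 2 ^ n := le_self_pow₀ (by norm_num) hn.ne'
    have h3 : (R / 2) ^ n ≤ R ^ n / 2 := by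
      rw [div_pow]
      gcongr
    nlinarith
  have h2 : ENNReal.ofReal a * ENNReal.ofReal (R ^ n * v / 2) ≤ 1 := le_trans (by gcongr) h1
  rw [← ENNReal.ofReal_mul (by positivity), ← ENNReal.ofReal_one,
    ENNReal.ofReal_le_ofReal_iff (by norm_num)] at h2
  have : a * (R ^ n * v / 2) = κ⁻¹ * (Real.exp (-(n * M)) * v / 2) := by
    rw [ha]
    field_simp
  rw [this, inv_mul_le_iff₀ hκ] at h2
  linarith

/-- The log-Hölder conditions give a reference point for each ball. -/
theorem aux_log (n : ℕ) (hn : 0 < n) (p : EuclideanSpace ℝ (Fin n) → ℝ) (C T : ℝ)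
    (hC : 0 < C) (hT : 2 ≤ T)
    (h1 : ∀ x y : EuclideanSpace ℝ (Fin n), dist x y ≤ 1/2 →
      |p x - p y| ≤ C / (-Real.log (dist x y)))
    (h2 : ∀ x y : EuclideanSpace ℝ (Fin n), ‖x‖ ≤ ‖y‖ →
      |p x - p y| ≤ C / Real.log (Real.exp 1 + ‖x‖)) (k : ℤ) :
    ∃ z, ∀ x, ‖x‖ ≤ (2:ℝ) ^ k → |p x - p z| * |Real.log ((2:ℝ) ^ k)| ≤ C * T ∨
      (1 ≤ (2:ℝ) ^ k ∧ Real.exp 1 + ‖x‖ ≤ ((2:ℝ) ^ k) ^ (1 / T)) := by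
  have hR : (0:ℝ) < 2 ^ k := by positivity
  have hCT : C ≤ C * T := le_mul_of_one_le_right hC.le (by linarith)
  rcases lt_or_ge k 0 with hk | hk
  · refine ⟨0, fun x hx => Or.inl (le_trans ?_ hCT)⟩
    have hR2 : (2:ℝ) ^ k ≤ 1 / 2 := by
      have := zpow_le_zpow_right₀ (by norm_num : (1:ℝ) ≤ 2) (by omega : k ≤ -1)
      simpa using this
    have h := h1 x 0 (by simpa using hx.trans hR2)
    rw [dist_zero_right] at h
    have hlR : Real.log ((2:ℝ) ^ k) < 0 := Real.log_neg hR (by linarith)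
    rcases eq_or_ne x 0 with rfl | hx0
    · simpa using hC.le
    · have hxp : 0 < ‖x‖ := norm_pos_iff.2 hx0
      have hl : Real.log ‖x‖ ≤ Real.log ((2:ℝ) ^ k) := Real.log_le_log hxp hx
      rw [abs_of_neg hlR]
      rw [le_div_iff₀ (by linarith)] at h
      exact le_trans (by gcongr) h
  · have hR1 : (1:ℝ) ≤ 2 ^ k := one_le_zpow₀ (by norm_num) hk
    refine ⟨EuclideanSpace.single ⟨0, hn⟩ ((2:ℝ) ^ k), fun x hx => ?_⟩
    by_cases hb : Real.exp 1 + ‖x‖ ≤ ((2:ℝ) ^ k) ^ (1 / T)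
    · exact Or.inr ⟨hR1, hb⟩
    left
    push Not at hb
    have h := h2 x (EuclideanSpace.single ⟨0, hn⟩ ((2:ℝ) ^ k)) (by
      rw [EuclideanSpace.norm_single, Real.norm_of_nonneg hR.le]; exact hx)
    have hl := Real.log_le_log (by positivity) hb.le
    rw [Real.log_rpow hR] at hl
    have he : 0 < Real.log (Real.exp 1 + ‖x‖) := by
      apply Real.log_pos
      have := Real.add_one_le_exp 1
      linarith [norm_nonneg x]
    rw [le_div_iff₀ he] at h
    rw [abs_of_nonneg (Real.log_nonneg hR1)]
    have hl2 : Real.log ((2:ℝ) ^ k) ≤ T * Real.log (Real.exp 1 + ‖x‖) := by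
      rw [one_div, inv_mul_le_iff₀ (by linarith)] at hl
      exact hl
    calc _ ≤ |p x - p (EuclideanSpace.single ⟨0, hn⟩ ((2:ℝ) ^ k))| *
          (T * Real.log (Real.exp 1 + ‖x‖)) := by gcongr
      _ ≤ C * T := by nlinarith

/-- if `q₁ : ℝⁿ → (1,∞)` is log-Hölder with `1 < (q₁)₋ ≤ (q₁)₊ < ∞`,
`0 < β < n/(q₁)₊`, and `1/q₁ - 1/q₂ = β/n`, then for the balls `B_k = B(0, 2^k)`,
`‖χ_{B_k}‖_{L^{q₂(·)}} ≤ C 2^{-kβ} ‖χ_{B_k}‖_{L^{q₁(·)}}` for all `k ∈ ℤ`. -/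
theorem stmt13 (n : ℕ) (hn : 0 < n) (q₁ q₂ : EuclideanSpace ℝ (Fin n) → ℝ)
    (hq₁meas : Measurable q₁) (hlh : LogHolder q₁)
    (Qm Qp : ℝ) (hQm : 1 < Qm) (hbounds : ∀ x, Qm ≤ q₁ x ∧ q₁ x ≤ Qp)
    (β : ℝ) (hβ : 0 < β) (hβ' : β < n / Qp)
    (hq₂ : ∀ x, 1 / q₁ x - 1 / q₂ x = β / n) :
    ∃ C > 0, ∀ k : ℤ,
      vLpNorm q₂ ((closedBall (0 : EuclideanSpace ℝ (Fin n)) ((2:ℝ) ^ k)).indicator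
          fun _ => (1:ℝ)) ≤
        ENNReal.ofReal (C * (2:ℝ) ^ (-(k:ℝ) * β)) *
          vLpNorm q₁ ((closedBall (0 : EuclideanSpace ℝ (Fin n)) ((2:ℝ) ^ k)).indicator
            fun _ => (1:ℝ)) := by
  obtain ⟨C, hC, h1, h2⟩ := hlh
  have hn' : (0:ℝ) < n := by exact_mod_cast hn
  have hQp : 1 < Qp := by
    have := hbounds 0
    linarith
  have hα : β / n < 1 / Qp := by
    rw [lt_div_iff₀ (by linarith)] at hβ' ⊢
    rw [div_mul_eq_mul_div, div_lt_one hn']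
    exact hβ'
  have hα0 : 0 < β / n := by positivity
  set α := β / n with hαdef
  set T := 2 + Qp + 1 / (1 / Qp - α) with hTdef
  have hd : 0 < 1 / Qp - α := by linarith
  have hd' : 0 < 1 / (1 / Qp - α) := by positivity
  have hp1 : ∀ x, 1 < q₁ x := fun x => by linarith [(hbounds x).1]
  have hq2inv : ∀ x, 1 / Qp - α ≤ 1 / q₂ x ∧ 1 / q₂ x ≤ 1 := by
    intro x
    have e := hq₂ x
    have l1 : 1 / Qp ≤ 1 / q₁ x := one_div_le_one_div_of_le (by linarith [hp1 x]) (hbounds x).2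
    have l2 : 1 / q₁ x ≤ 1 := by
      rw [div_le_one (by linarith [hp1 x])]
      exact (hp1 x).le
    constructor <;> linarith
  have hq2pos : ∀ x, 0 < q₂ x := fun x => one_div_pos.1 (hd.trans_le (hq2inv x).1)
  have hq21 : ∀ x, 1 ≤ q₂ x := by
    intro x
    have := (hq2inv x).2
    rwa [div_le_one (hq2pos x)] at this
  have hq2T : ∀ x, q₂ x ≤ T := by
    intro x
    have := one_div_le_one_div_of_le hd (hq2inv x).1
    rw [one_div_one_div] at this
    linarith
  have hT2 : 2 ≤ T := by linarith
  have hdiff : ∀ x z, |q₂ x - q₂ z| ≤ T ^ 2 * |q₁ x - q₁ z| := by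
    intro x z
    have e1 := hq₂ x
    have e2 := hq₂ z
    have a1 := hp1 x
    have a2 := hp1 z
    have a3 := hq2pos x
    have a4 := hq2pos z
    have e3 : 1 / q₁ x - 1 / q₁ z = 1 / q₂ x - 1 / q₂ z := by linarith
    have e4 : q₂ x - q₂ z = (q₂ x * q₂ z) * (1 / (q₁ x * q₁ z)) * (q₁ x - q₁ z) := by
      have e5 : 1 / (q₁ x * q₁ z) * (q₁ x - q₁ z) = - (1 / q₁ x - 1 / q₁ z) := by
        field_simp
        ring
      rw [mul_assoc, e5, e3]
      field_simp
      ring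
    rw [e4, abs_mul]
    gcongr
    rw [abs_of_pos (by positivity)]
    have b1 : q₂ x * q₂ z ≤ T * T := mul_le_mul (hq2T x) (hq2T z) a4.le (by linarith)
    have b2 : 1 / (q₁ x * q₁ z) ≤ 1 := by
      rw [div_le_one (by positivity)]
      nlinarith
    calc q₂ x * q₂ z * (1 / (q₁ x * q₁ z)) ≤ q₂ x * q₂ z * 1 := by gcongr
      _ ≤ T ^ 2 := by linarith
  set v := (volume (closedBall (0 : EuclideanSpace ℝ (Fin n)) 1)).toReal with hv
  have hvpos : 0 < v := ENNReal.toReal_pos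
    (measure_closedBall_pos volume _ one_pos).ne' measure_closedBall_lt_top.ne
  set K := 1 + (Real.exp (n * (T ^ 2 * (C * T))) + 1) * v with hK
  set κ := min 1 (Real.exp (-(n * (C * T))) * v / 4) with hκ
  have hκ0 : 0 < κ := lt_min one_pos (by positivity)
  have hK0 : 0 < K := by positivity
  refine ⟨K / κ, by positivity, fun k => ?_⟩
  obtain ⟨z, hz⟩ := aux_log n hn q₁ C T hC hT2 h1 h2 k
  have hR : (0:ℝ) < 2 ^ k := by positivity
  have up := aux_upper n q₂ T (q₂ z) (2 ^ k) (T ^ 2 * (C * T)) hR (hq21 z) (hq2T z) hq21 (by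
    intro x hx
    rcases hz x hx with h | ⟨h, h'⟩
    · left
      calc |q₂ x - q₂ z| * |Real.log (2 ^ k)|
          ≤ (T ^ 2 * |q₁ x - q₁ z|) * |Real.log (2 ^ k)| := by gcongr; exact hdiff x z
        _ = T ^ 2 * (|q₁ x - q₁ z| * |Real.log (2 ^ k)|) := by ring
        _ ≤ _ := by gcongr
    · exact Or.inr ⟨h, by linarith [Real.exp_pos 1]⟩)
  have low := aux_lower n hn q₁ (q₁ z) (2 ^ k) (C * T) κ hR (hp1 z).le (fun x => (hp1 x).le) (by
    intro x hx hx2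
    rcases hz x hx with h | ⟨h, h'⟩
    · exact h
    · exfalso
      have l1 : ((2:ℝ) ^ k) ^ (1 / T) ≤ ((2:ℝ) ^ k) ^ (1 / 2 : ℝ) :=
        Real.rpow_le_rpow_of_exponent_le h (one_div_le_one_div_of_le (by norm_num) hT2)
      rw [← Real.sqrt_eq_rpow] at l1
      have l2 := Real.sq_sqrt hR.le
      have l3 := Real.add_one_le_exp 1
      nlinarith [sq_nonneg (Real.sqrt ((2:ℝ) ^ k) - 1)]) hκ0 (min_le_left _ _) (by
    have := min_le_right 1 (Real.exp (-(n * (C * T))) * v / 4)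
    linarith)
  rw [← hv, ← hK] at up
  refine up.trans (le_trans (le_of_eq ?_) (mul_le_mul_right low _))
  rw [← ENNReal.ofReal_mul (by positivity)]
  congr 1
  have e : (n:ℝ) / q₂ z = -β + n / q₁ z := by
    have e1 := hq₂ z
    have e2 : 1 / q₂ z = 1 / q₁ z - β / n := by linarith
    rw [div_eq_mul_one_div, e2]
    field_simp
    ring
  have e3 : (2:ℝ) ^ (-(k:ℝ) * β) = ((2:ℝ) ^ k) ^ (-β) := by
    rw [← Real.rpow_intCast, ← Real.rpow_mul (by norm_num)]
    congr 1
    ring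
  rw [e, Real.rpow_add hR, e3]
  field_simp
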